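/- arXiv:2402.02853 — 2 statements merged into one kernel-verified Lean document; each statement's English description precedes it below -/
import Mathlib

section
/- Let m ≥ 2 be an integer, n = 2^{2m−1} − 1, and let β be a primitive n-th root of unity in F_{4^{2m−1}}. Then the minimal polynomial m_β(x) of β over F_4 has degree 2m − 1, and the cyclic code of length 2n over F_4 with generator polynomial (x−1)^2 m_β(x) has dimension 2n − 2m − 1 and minimum distance exactly 4. Moreover, for m ≥ 3 this code is distance-optimal. -/
open Polynomial

/-- The cyclic code of length `N` over the field `F` generated by the polynomial `g`.
Codewords are identified with the representatives of degree `< N` of the elements of the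
ideal generated by `g` in `F[x]/(x^N - 1)`; equivalently, a polynomial `c` of degree `< N`
is a codeword iff `c ∈ (g, x^N - 1)` as an ideal of `F[x]`. -/
noncomputable def cyclicCode (F : Type*) [Field F] (N : ℕ) (g : Polynomial F) :
    Submodule F (Polynomial F) :=
  Polynomial.degreeLT F N ⊓
    Submodule.restrictScalars F (Ideal.span ({g, Polynomial.X ^ N - 1} : Set (Polynomial F)))

/-- The minimum distance (equivalently, the minimum Hamming weight of a nonzero codeword,
a codeword being identified with its coefficient vector) of a linear code of polynomials. -/
noncomputable def minDist {F : Type*} [Field F] (C : Submodule F (Polynomial F)) : ℕ :=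
  sInf {w | ∃ c ∈ C, c ≠ 0 ∧ c.support.card = w}

/-- The minimum Hamming distance of an arbitrary (not necessarily linear) code
`D ⊆ F^N`. -/
noncomputable def setMinDist {F : Type*} {N : ℕ} (D : Set (Fin N → F)) : ℕ :=
  letI := Classical.decEq F
  sInf {w | ∃ u ∈ D, ∃ v ∈ D, u ≠ v ∧ hammingDist u v = w}

/-!
Write `|F| = 2 ^ e` and let `r` be coprime to `e`, so that the solutions in `F` of `x ^ 2 ^ r = x`
are `0` and `1`. If `a + b + c = 0` with `a`, `b` nonzero in `F`, and `a * x + b * y + c * z = 0`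
with `x`, `y`, `z` fixed by the `2 ^ r`-th power map, then `x ≠ y` would give
`b / c = (x - z) / (y - x)`, which is fixed by that map, so `b = c` and `a = 0`; hence `x = y`.

Let `c` be a nonzero polynomial with at most three terms, a double root at `1` and a root at `β`.
The equations `c(1) = c'(1) = 0` put the above in force with the exponents of `c` modulo `2` in the
role of `x`, `y`, `z` (and `r = 1`), the equations `c(1) = c(β) = 0` with the powers of `β` at these
exponents. So all exponents agree modulo `2` and modulo the odd number `n = 2 ^ r - 1`, that is,
modulo the length `2 * n`: then `c` has a single term, contradicting `c(1) = 0`. The codeword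
`(X - 1) * (X ^ n - 1)` attains weight four, and distance five is excluded by the Hamming bound.
-/

section HammingBound

/-- The number of words of length `N` over an alphabet of size `q` lying within Hamming distance
`t` of a given word. -/
def hammingBallVolume (q N t : ℕ) : ℕ := ∑ i ∈ Finset.range (t + 1), N.choose i * (q - 1) ^ i

variable {ι α : Type*} [Fintype ι] [Fintype α] [DecidableEq α]

lemma card_filter_support_eq [DecidableEq ι] [Zero α] (s : Finset ι) :
    (Finset.univ.filter fun v : ι → α => Finset.univ.filter (v · ≠ 0) = s).card =
      (Fintype.card α - 1) ^ s.card := by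
  have h_filter : (Finset.univ.filter fun v : ι → α => Finset.univ.filter (v · ≠ 0) = s) =
      Fintype.piFinset fun i => if i ∈ s then Finset.univ.erase 0 else {0} := by
    ext v
    simp only [Finset.mem_filter_univ, Fintype.mem_piFinset, Finset.ext_iff]
    refine forall_congr' fun i => ?_
    by_cases hi : i ∈ s <;> simp [hi]
  have h_card (i : ι) : (if i ∈ s then Finset.univ.erase (0 : α) else {0}).card =
      if i ∈ s then Fintype.card α - 1 else 1 := by
    split_ifs <;> simp
  simp only [h_filter, Fintype.card_piFinset, h_card, Finset.prod_ite_mem, Finset.univ_inter,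
    Finset.prod_const]

lemma card_filter_hammingNorm_eq [DecidableEq ι] [Zero α] (i : ℕ) :
    (Finset.univ.filter fun v : ι → α => hammingNorm v = i).card =
      (Fintype.card ι).choose i * (Fintype.card α - 1) ^ i := by
  have h_mapsTo : ∀ v ∈ Finset.univ.filter fun v : ι → α => hammingNorm v = i,
      Finset.univ.filter (v · ≠ 0) ∈ Finset.univ.powersetCard i := by
    simp [hammingNorm]
  have h_fiber : ∀ s ∈ Finset.univ.powersetCard i,
      ((Finset.univ.filter fun v : ι → α => hammingNorm v = i).filter
        fun v => Finset.univ.filter (v · ≠ 0) = s).card = (Fintype.card α - 1) ^ i := by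
    intro s hs
    obtain rfl := (Finset.mem_powersetCard.1 hs).2
    rw [← card_filter_support_eq, Finset.filter_filter]
    congr 1
    ext v
    simp only [Finset.mem_filter_univ, and_iff_right_iff_imp]
    exact congrArg Finset.card
  rw [Finset.card_eq_sum_card_fiberwise h_mapsTo, Finset.sum_congr rfl h_fiber,
    Finset.sum_const, Finset.card_powersetCard, Finset.card_univ, smul_eq_mul]

lemma card_filter_hammingNorm_le [DecidableEq ι] [Zero α] (t : ℕ) :
    (Finset.univ.filter fun v : ι → α => hammingNorm v ≤ t).card =
      hammingBallVolume (Fintype.card α) (Fintype.card ι) t := by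
  have h_mapsTo : ∀ v ∈ Finset.univ.filter fun v : ι → α => hammingNorm v ≤ t,
      hammingNorm v ∈ Finset.range (t + 1) := by
    simp
  rw [Finset.card_eq_sum_card_fiberwise h_mapsTo, hammingBallVolume]
  refine Finset.sum_congr rfl fun i hi => ?_
  rw [← card_filter_hammingNorm_eq, Finset.filter_filter]
  congr 1
  ext v
  simp only [Finset.mem_filter_univ, and_iff_right_iff_imp]
  rintro rfl
  exact Nat.lt_succ_iff.1 (Finset.mem_range.1 hi)

theorem card_mul_hammingBallVolume_le [AddGroup α] {D : Set (ι → α)} {t : ℕ}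
    (hD : D.Pairwise fun u v => 2 * t < hammingDist u v) :
    Nat.card D * hammingBallVolume (Fintype.card α) (Fintype.card ι) t ≤
      Fintype.card α ^ Fintype.card ι := by
  classical
  have h_dist (u e : ι → α) : hammingDist u (u + e) = hammingNorm e := by
    rw [hammingDist_eq_hammingNorm, neg_add_cancel_left]
  have h_inj : Function.Injective
      fun p : D × {e : ι → α // hammingNorm e ≤ t} => p.1.1 + p.2.1 := by
    rintro ⟨⟨u, hu⟩, ⟨e, he⟩⟩ ⟨⟨v, hv⟩, ⟨f, hf⟩⟩ (h : u + e = v + f)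
    have huv : u = v := by
      by_contra hne
      have h_far : 2 * t < hammingDist u v := hD hu hv hne
      have h_near : hammingDist u v ≤ hammingNorm e + hammingNorm f := by
        rw [← h_dist u, ← h_dist v, ← h, hammingDist_comm v]
        exact hammingDist_triangle _ _ _
      omega
    subst huv
    simp [add_left_cancel h]
  simpa only [Nat.card_prod, Nat.card_eq_fintype_card (α := {e : ι → α // hammingNorm e ≤ t}),
    Fintype.card_subtype, card_filter_hammingNorm_le, Nat.card_eq_fintype_card (α := ι → α),
    Fintype.card_fun] using Nat.card_le_card_of_injective _ h_inj

lemma setMinDist_le_hammingDist {F : Type*} [Field F] [DecidableEq F] {N : ℕ}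
    {D : Set (Fin N → F)} {u v : Fin N → F} (hu : u ∈ D) (hv : v ∈ D) (huv : u ≠ v) :
    setMinDist D ≤ hammingDist u v :=
  Nat.sInf_le ⟨u, hu, v, hv, huv, by congr!⟩

theorem setMinDist_le_of_lt_card_mul_hammingBallVolume {F : Type*} [Field F] [Fintype F] {N t : ℕ}
    {D : Set (Fin N → F)}
    (hD : Fintype.card F ^ N < Nat.card D * hammingBallVolume (Fintype.card F) N t) :
    setMinDist D ≤ 2 * t := by
  classical
  contrapose! hD
  simpa only [Fintype.card_fin] using card_mul_hammingBallVolume_le fun u hu v hv huv =>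
    hD.trans_le (setMinDist_le_hammingDist hu hv huv)

lemma hammingBallVolume_two_mul_two (q M : ℕ) :
    hammingBallVolume q (2 * (M + 1)) 2 =
      1 + 2 * (M + 1) * (q - 1) + (M + 1) * (2 * M + 1) * (q - 1) ^ 2 := by
  have h_choose : (2 * (M + 1)).choose 2 = (M + 1) * (2 * M + 1) := by
    rw [Nat.choose_two_right, mul_assoc, Nat.mul_div_cancel_left _ two_pos]
    rfl
  simp only [hammingBallVolume, Finset.sum_range_succ, Finset.sum_range_zero, Nat.choose_zero_right,
    Nat.choose_one_right, h_choose, pow_zero, pow_one, mul_one, zero_add]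

lemma two_pow_lt_hammingBallVolume {r : ℕ} (hr : 2 ≤ r) :
    2 ^ (r + 2) < hammingBallVolume 2 (2 * (2 ^ r - 1)) 2 := by
  obtain ⟨M, hM⟩ : ∃ M, 2 ^ r = M + 4 :=
    Nat.exists_eq_add_of_le' (Nat.pow_le_pow_right two_pos hr)
  rw [show 2 ^ r - 1 = (M + 2) + 1 by omega, hammingBallVolume_two_mul_two, pow_add, hM]
  nlinarith

lemma four_pow_lt_hammingBallVolume {r : ℕ} (hr : 5 ≤ r) :
    4 ^ (r + 2) < hammingBallVolume 4 (2 * (2 ^ r - 1)) 2 := by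
  obtain ⟨M, hM⟩ : ∃ M, 2 ^ r = M + 32 :=
    Nat.exists_eq_add_of_le' (Nat.pow_le_pow_right two_pos hr)
  have h_four : 4 ^ r = (M + 32) ^ 2 := by rw [← hM, ← pow_mul, pow_mul']; rfl
  rw [show 2 ^ r - 1 = (M + 30) + 1 by omega, hammingBallVolume_two_mul_two, pow_add, h_four]
  nlinarith

end HammingBound

section CyclicCode

variable {F : Type*} [Field F] {N : ℕ} {g : F[X]}

lemma mem_cyclicCode (hg : g ∣ X ^ N - 1) {c : F[X]} :
    c ∈ cyclicCode F N g ↔ c.degree < N ∧ g ∣ c := by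
  rw [cyclicCode, Submodule.mem_inf, mem_degreeLT, Submodule.restrictScalars_mem,
    Ideal.span_pair_eq_span_left_iff_dvd.2 hg, Ideal.mem_span_singleton]

lemma cyclicCode_eq_map_mulLeft (hN : N ≠ 0) (hg : g ∣ X ^ N - 1) :
    cyclicCode F N g = (degreeLT F (N - g.natDegree)).map (LinearMap.mulLeft F g) := by
  have hg0 : g ≠ 0 := ne_zero_of_dvd_ne_zero (X_pow_sub_C_ne_zero hN.bot_lt 1) hg
  have h_degree (a : F[X]) : (g * a).degree < N ↔ a.degree < (N - g.natDegree : ℕ) := by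
    rcases eq_or_ne a 0 with rfl | ha
    · simp [bot_lt_iff_ne_bot]
    rw [← natDegree_lt_iff_degree_lt (mul_ne_zero hg0 ha), ← natDegree_lt_iff_degree_lt ha,
      natDegree_mul hg0 ha, lt_tsub_iff_left]
  ext c
  rw [mem_cyclicCode hg, Submodule.mem_map]
  constructor
  · rintro ⟨hc, a, rfl⟩
    exact ⟨a, mem_degreeLT.2 ((h_degree a).1 hc), rfl⟩
  · rintro ⟨a, ha, rfl⟩
    exact ⟨(h_degree a).2 (mem_degreeLT.1 ha), dvd_mul_right g a⟩

theorem finrank_cyclicCode_add_natDegree (hN : N ≠ 0) (hg : g ∣ X ^ N - 1) :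
    Module.finrank F (cyclicCode F N g) + g.natDegree = N := by
  have h_ne : (X ^ N - 1 : F[X]) ≠ 0 := X_pow_sub_C_ne_zero hN.bot_lt 1
  have h_le : g.natDegree ≤ N :=
    (natDegree_le_of_dvd hg h_ne).trans_eq (natDegree_X_pow_sub_C (r := 1))
  have h_inj : Function.Injective (LinearMap.mulLeft F g) :=
    mul_right_injective₀ (ne_zero_of_dvd_ne_zero h_ne hg)
  rw [cyclicCode_eq_map_mulLeft hN hg, ← (Submodule.equivMapOfInjective _ h_inj _).finrank_eq,
    (degreeLTEquiv F _).finrank_eq, Module.finrank_fin_fun, Nat.sub_add_cancel h_le]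

lemma card_cyclicCode [Fintype F] :
    Nat.card (cyclicCode F N g) = Fintype.card F ^ Module.finrank F (cyclicCode F N g) := by
  have : Module.Finite F (degreeLT F N) := .equiv (degreeLTEquiv F N).symm
  have : Module.Finite F (cyclicCode F N g) := Submodule.finiteDimensional_inf_left _ _
  rw [Module.natCard_eq_pow_finrank (K := F), Nat.card_eq_fintype_card]

end CyclicCode

section PowSubOne

lemma coprime_pow_sub_one {q r : ℕ} (hq : 0 < q) (hr : r ≠ 0) : q.Coprime (q ^ r - 1) :=
  Nat.Coprime.coprime_dvd_left (dvd_pow_self q hr)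
    ((Nat.coprime_self_sub_right (Nat.one_le_pow _ _ hq)).2 (Nat.coprime_one_right _))

lemma pow_sub_one_dvd_pow_sub_one_iff {q r k : ℕ} (hq : 2 ≤ q) :
    q ^ r - 1 ∣ q ^ k - 1 ↔ r ∣ k := by
  rw [← Nat.gcd_eq_left_iff_dvd, Nat.pow_sub_one_gcd_pow_sub_one,
    tsub_left_inj (Nat.one_le_pow _ _ (by omega)) (Nat.one_le_pow _ _ (by omega)),
    Nat.pow_right_inj hq, Nat.gcd_eq_left_iff_dvd]

lemma orderOf_unitOfCoprime_pow {q e r : ℕ} (hq : 2 ≤ q) (her : e.Coprime r)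
    (h : (q ^ e).Coprime (q ^ r - 1)) : orderOf (ZMod.unitOfCoprime (q ^ e) h) = r := by
  refine Nat.dvd_right_iff_eq.1 fun k => ?_
  have h_pow : 1 ≤ q ^ (e * k) := Nat.one_le_pow _ _ (by omega)
  calc orderOf (ZMod.unitOfCoprime (q ^ e) h) ∣ k
      ↔ 1 ≡ q ^ (e * k) [MOD q ^ r - 1] := by
        rw [orderOf_dvd_iff_pow_eq_one, Units.ext_iff, Units.val_pow_eq_pow_val,
          ZMod.coe_unitOfCoprime, ← Nat.cast_pow, ← pow_mul, Units.val_one,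
          ← Nat.cast_one (R := ZMod _), ZMod.natCast_eq_natCast_iff, Nat.ModEq.comm]
    _ ↔ q ^ r - 1 ∣ q ^ (e * k) - 1 := Nat.modEq_iff_dvd' h_pow
    _ ↔ r ∣ e * k := pow_sub_one_dvd_pow_sub_one_iff hq
    _ ↔ r ∣ k := her.symm.dvd_mul_left

end PowSubOne

section FrobeniusFixedPoints

lemma pow_eq_self_of_coprime {M : Type*} [Monoid M] {x : M} {q e r : ℕ} (her : e.Coprime r)
    (he : x ^ q ^ e = x) (hr : x ^ q ^ r = x) : x ^ q = x := by
  have h (k : ℕ) : Function.IsPeriodicPt (· ^ q : M → M) k x ↔ x ^ q ^ k = x := by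
    rw [Function.IsPeriodicPt, Function.IsFixedPt, pow_iterate]
  simpa only [her.gcd_eq_one, pow_one] using (h _).1 (((h e).2 he).gcd ((h r).2 hr))

variable {F K : Type*} [Field F] [Fintype F] [Field K] [Algebra F K] {e r : ℕ}

lemma eq_one_of_algebraMap_pow_eq (hF : Fintype.card F = 2 ^ e) (her : e.Coprime r) {t : F}
    (ht0 : t ≠ 0) (ht : algebraMap F K t ^ 2 ^ r = algebraMap F K t) : t = 1 := by
  have h_r : t ^ 2 ^ r = t := (algebraMap F K).injective (by rw [map_pow, ht])
  have h_sq : t ^ 2 = t := pow_eq_self_of_coprime her (hF ▸ FiniteField.pow_card t) h_r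
  exact mul_left_cancel₀ ht0 (by rw [← sq, h_sq, mul_one])

lemma eq_of_trinomial_eq_zero (hF : Fintype.card F = 2 ^ e) (her : e.Coprime r)
    {a b c : F} {x y z : K} (ha : a ≠ 0) (hb : b ≠ 0) (habc : a + b + c = 0)
    (hx : x ^ 2 ^ r = x) (hy : y ^ 2 ^ r = y) (hz : z ^ 2 ^ r = z)
    (h : algebraMap F K a * x + algebraMap F K b * y + algebraMap F K c * z = 0) : x = y := by
  have : CharP F 2 := charP_of_card_eq_prime_pow hF
  have : CharP K 2 := charP_of_injective_algebraMap (algebraMap F K).injective 2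
  obtain rfl : a = -(b + c) := by linear_combination habc
  by_contra hxy
  have h_sub : algebraMap F K b * (y - x) = algebraMap F K c * (x - z) := by
    simp only [map_neg, map_add] at h
    linear_combination h
  have hyx : y - x ≠ 0 := sub_ne_zero.2 (Ne.symm hxy)
  have hb' : algebraMap F K b ≠ 0 := by simpa using hb
  have hc : algebraMap F K c ≠ 0 := left_ne_zero_of_mul (h_sub ▸ mul_ne_zero hb' hyx)
  have h_ratio : algebraMap F K (b / c) = (x - z) / (y - x) := by
    rw [map_div₀, div_eq_div_iff hc hyx, h_sub, mul_comm]
  have h_eq_one : b / c = 1 := by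
    refine eq_one_of_algebraMap_pow_eq (K := K) hF her (div_ne_zero hb (by simpa using hc)) ?_
    rw [h_ratio, div_pow, sub_pow_char_pow, sub_pow_char_pow, hx, hy, hz]
  rw [(div_eq_one_iff_eq (by simpa using hc)).1 h_eq_one, CharTwo.add_self_eq_zero, neg_zero] at ha
  exact ha rfl

lemma eq_of_sum_eq_zero_of_card_le_three (hF : Fintype.card F = 2 ^ e) (her : e.Coprime r)
    {ι : Type*} {s : Finset ι} (hs : s.card ≤ 3) {a : ι → F}
    (ha : ∀ i ∈ s, a i ≠ 0) {x : ι → K} (hx : ∀ i ∈ s, x i ^ 2 ^ r = x i)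
    (h_sum : ∑ i ∈ s, a i = 0) (h_weighted : ∑ i ∈ s, algebraMap F K (a i) * x i = 0)
    {i j : ι} (hi : i ∈ s) (hj : j ∈ s) : x i = x j := by
  classical
  rcases eq_or_ne i j with rfl | hij
  · rfl
  have hji : j ∈ s.erase i := Finset.mem_erase.2 ⟨hij.symm, hj⟩
  have h_rest : ((s.erase i).erase j).card ≤ 1 := by
    rw [Finset.card_erase_of_mem hji, Finset.card_erase_of_mem hi]
    omega
  rw [← Finset.add_sum_erase _ _ hi, ← Finset.add_sum_erase _ _ hji, ← add_assoc]
    at h_sum h_weighted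
  rcases Nat.le_one_iff_eq_zero_or_eq_one.1 h_rest with h_empty | h_singleton
  · rw [Finset.card_eq_zero.1 h_empty, Finset.sum_empty] at h_sum h_weighted
    exact eq_of_trinomial_eq_zero hF her (ha i hi) (ha j hj) h_sum (hx i hi) (hx j hj) (hx i hi)
      (by rwa [map_zero, zero_mul])
  · obtain ⟨k, hk⟩ := Finset.card_eq_one.1 h_singleton
    have hks : k ∈ s :=
      Finset.mem_of_mem_erase (Finset.mem_of_mem_erase (hk ▸ Finset.mem_singleton_self k))
    rw [hk, Finset.sum_singleton] at h_sum h_weighted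
    exact eq_of_trinomial_eq_zero hF her (ha i hi) (ha j hj) h_sum (hx i hi) (hx j hj) (hx k hks)
      h_weighted

theorem four_le_card_support_of_aeval_primitiveRoot_eq_zero (hF : Fintype.card F = 2 ^ e)
    (her : e.Coprime r) {β : K} (hβ : IsPrimitiveRoot β (2 ^ r - 1)) {c : F[X]} (hc : c ≠ 0)
    (h_degree : c.degree < (2 * (2 ^ r - 1) : ℕ)) (h_one : c.eval 1 = 0)
    (h_derivative : c.derivative.eval 1 = 0) (hβc : aeval β c = 0) : 4 ≤ c.support.card := by
  by_contra! h_card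
  have : CharP F 2 := charP_of_card_eq_prime_pow hF
  have h_coeff_sum : ∑ i ∈ c.support, c.coeff i = 0 := by
    simpa [eval_eq_sum, Polynomial.sum_def] using h_one
  have h_parity {i j : ℕ} (hi : i ∈ c.support) (hj : j ∈ c.support) : i ≡ j [MOD 2] := by
    refine (CharP.natCast_eq_natCast F 2).1 ?_
    refine eq_of_sum_eq_zero_of_card_le_three (r := 1) hF e.coprime_one_right
      (Nat.lt_succ_iff.1 h_card) (fun _ => mem_support_iff.1)
      (x := fun i => (i : F)) ?_ h_coeff_sum ?_ hi hj
    · exact fun i _ => map_natCast (frobenius F 2) i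
    · simpa [derivative_eval, Polynomial.sum_def] using h_derivative
  have h_lt {i : ℕ} (hi : i ∈ c.support) : i < 2 * (2 ^ r - 1) :=
    WithBot.coe_lt_coe.1 ((le_degree_of_mem_supp i hi).trans_lt h_degree)
  have h_eq {i j : ℕ} (hi : i ∈ c.support) (hj : j ∈ c.support) : i = j := by
    have h_order : 2 ^ r - 1 ≠ 0 := by have := h_lt hi; omega
    have h_mod : i ≡ j [MOD 2 ^ r - 1] := by
      rw [hβ.eq_orderOf, ← (hβ.isOfFinOrder h_order).pow_eq_pow_iff_modEq]
      refine eq_of_sum_eq_zero_of_card_le_three hF her (Nat.lt_succ_iff.1 h_card)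
        (fun _ => mem_support_iff.1) (x := fun i => β ^ i) ?_ h_coeff_sum ?_ hi hj
      · intro k _
        have h_fixed : β ^ 2 ^ r = β := by
          rw [← pow_sub_one_mul (by positivity), hβ.pow_eq_one, one_mul]
        rw [← pow_mul', pow_mul, h_fixed]
      · simpa [aeval_def, eval₂_eq_sum, Polynomial.sum_def] using hβc
    have hr : r ≠ 0 := by rintro rfl; exact h_order rfl
    exact Nat.ModEq.eq_of_lt_of_lt ((Nat.modEq_and_modEq_iff_modEq_mul
      (coprime_pow_sub_one two_pos hr)).1 ⟨h_parity hi hj, h_mod⟩) (h_lt hi) (h_lt hj)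
  obtain ⟨i, hi⟩ := nonempty_support_iff.2 hc
  have h_support : c.support = {i} :=
    Finset.eq_singleton_iff_unique_mem.2 ⟨hi, fun j hj => h_eq hj hi⟩
  rw [h_support, Finset.sum_singleton] at h_coeff_sum
  exact mem_support_iff.1 hi h_coeff_sum

end FrobeniusFixedPoints

section Generator

variable {F K : Type*} [Field F]

theorem natDegree_minpoly_of_isPrimitiveRoot [Fintype F] [Field K] [Algebra F K] {p e r : ℕ}
    (hp : p.Prime) (hF : Fintype.card F = p ^ e) (her : e.Coprime r) (hr : r ≠ 0) {β : K}
    (hβ : IsPrimitiveRoot β (p ^ r - 1)) : (minpoly F β).natDegree = r := by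
  have : Fact p.Prime := ⟨hp⟩
  have h_pos : 0 < p ^ r - 1 := Nat.sub_pos_of_lt (Nat.one_lt_pow hr hp.one_lt)
  have h_cyclotomic : minpoly F β ∣ cyclotomic (p ^ r - 1) F := by
    refine minpoly.dvd F β ?_
    rw [aeval_def, ← eval_map, map_cyclotomic]
    exact hβ.isRoot_cyclotomic h_pos
  have h_irreducible : Irreducible (minpoly F β) :=
    minpoly.irreducible (hβ.isIntegral h_pos).tower_top
  rw [natDegree_of_dvd_cyclotomic_of_irreducible hF (coprime_pow_sub_one hp.pos hr)
    h_cyclotomic h_irreducible, orderOf_unitOfCoprime_pow hp.two_le her]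

lemma X_sub_one_mul_minpoly_dvd [CommRing K] [IsDomain K] [Algebra F K] {n : ℕ} (hn : 1 < n)
    {β : K} (hβ : IsPrimitiveRoot β n) : (X - 1) * minpoly F β ∣ X ^ n - 1 := by
  rw [← mul_geom_sum]
  refine mul_dvd_mul_left _ (minpoly.dvd F β ?_)
  simpa only [map_sum, map_pow, aeval_X] using hβ.geom_sum_eq_zero hn

lemma X_sub_one_mul_X_pow_sub_one_dvd (R : Type*) [CommRing R] [CharP R 2] (n : ℕ) :
    ((X - 1) * (X ^ n - 1) : R[X]) ∣ X ^ (2 * n) - 1 := by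
  have h_sq : (X ^ (2 * n) - 1 : R[X]) = (X ^ n - 1) * (X ^ n - 1) := by
    rw [pow_mul', ← sq, sub_pow_char, one_pow]
  rw [h_sq]
  exact mul_dvd_mul_right (sub_one_dvd_pow_sub_one X n) _

lemma natDegree_X_sub_one_mul_X_pow_sub_one (R : Type*) [Ring R] [Nontrivial R] {n : ℕ}
    (hn : n ≠ 0) : ((X - 1) * (X ^ n - 1) : R[X]).natDegree = n + 1 := by
  have h_linear : (X - 1 : R[X]).natDegree = 1 := natDegree_X_sub_C 1
  have h_pow : (X ^ n - 1 : R[X]).natDegree = n := natDegree_X_pow_sub_C (r := 1)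
  have h_monic : (X ^ n - 1 : R[X]).Monic := monic_X_pow_sub_C 1 hn
  have h_linear_monic : (X - 1 : R[X]).Monic := monic_X_sub_C 1
  rw [h_linear_monic.natDegree_mul h_monic, h_linear, h_pow, add_comm]

lemma card_support_X_sub_one_mul_X_pow_sub_one_le (R : Type*) [Ring R] (n : ℕ) :
    ((X - 1) * (X ^ n - 1) : R[X]).support.card ≤ 4 := by
  have h (k : ℕ) : (X ^ k - 1 : R[X]).support.card ≤ 2 := by
    have h_binomial : (X ^ k - 1 : R[X]) = C 1 * X ^ k + C (-1) * X ^ 0 := by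
      simp [sub_eq_add_neg]
    rw [h_binomial]
    exact (Finset.card_le_card (support_binomial_subset ..)).trans Finset.card_le_two
  calc _ ≤ (X - 1 : R[X]).support.card * (X ^ n - 1 : R[X]).support.card := card_support_mul_le
    _ ≤ 2 * 2 := Nat.mul_le_mul (by simpa only [pow_one] using h 1) (h n)

lemma X_sub_one_sq_mul_minpoly_dvd [CommRing K] [IsDomain K] [Algebra F K] {n : ℕ} (hn : 1 < n)
    {β : K} (hβ : IsPrimitiveRoot β n) :
    (X - 1) ^ 2 * minpoly F β ∣ (X - 1) * (X ^ n - 1) := by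
  rw [sq, mul_assoc]
  exact mul_dvd_mul_left _ (X_sub_one_mul_minpoly_dvd hn hβ)

lemma X_sub_one_sq_mul_minpoly_dvd_X_pow_sub_one [CharP F 2] [CommRing K] [IsDomain K] [Algebra F K]
    {n : ℕ} (hn : 1 < n) {β : K} (hβ : IsPrimitiveRoot β n) :
    (X - 1) ^ 2 * minpoly F β ∣ X ^ (2 * n) - 1 :=
  (X_sub_one_sq_mul_minpoly_dvd hn hβ).trans (X_sub_one_mul_X_pow_sub_one_dvd F n)

lemma natDegree_X_sub_one_sq_mul_minpoly [Ring K] [Algebra F K] {β : K} (hβ : IsIntegral F β) :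
    ((X - 1) ^ 2 * minpoly F β).natDegree = (minpoly F β).natDegree + 2 := by
  have h_monic : (X - 1 : F[X]).Monic := monic_X_sub_C 1
  have h_natDegree : (X - 1 : F[X]).natDegree = 1 := natDegree_X_sub_C 1
  rw [(h_monic.pow 2).natDegree_mul (minpoly.monic hβ), h_monic.natDegree_pow, h_natDegree,
    mul_one, add_comm]

end Generator

section Code

variable {F K : Type*} [Field F] [Fintype F] [Field K] [Algebra F K] {e r : ℕ}

theorem finrank_cyclicCode_X_sub_one_sq_mul_minpoly_add (hF : Fintype.card F = 2 ^ e)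
    (her : e.Coprime r) (hr : 2 ≤ r) {β : K} (hβ : IsPrimitiveRoot β (2 ^ r - 1)) :
    Module.finrank F (cyclicCode F (2 * (2 ^ r - 1)) ((X - 1) ^ 2 * minpoly F β)) + (r + 2) =
      2 * (2 ^ r - 1) := by
  have : CharP F 2 := charP_of_card_eq_prime_pow hF
  have h_pow : 2 ^ 2 ≤ 2 ^ r := Nat.pow_le_pow_right two_pos hr
  have h_finrank := finrank_cyclicCode_add_natDegree (by omega)
    (X_sub_one_sq_mul_minpoly_dvd_X_pow_sub_one (F := F) (by omega) hβ)
  rwa [natDegree_X_sub_one_sq_mul_minpoly (hβ.isIntegral (by omega)).tower_top,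
    natDegree_minpoly_of_isPrimitiveRoot Nat.prime_two hF her (by omega) hβ] at h_finrank

theorem minDist_cyclicCode_X_sub_one_sq_mul_minpoly (hF : Fintype.card F = 2 ^ e)
    (her : e.Coprime r) (hr : 2 ≤ r) {β : K} (hβ : IsPrimitiveRoot β (2 ^ r - 1)) :
    minDist (cyclicCode F (2 * (2 ^ r - 1)) ((X - 1) ^ 2 * minpoly F β)) = 4 := by
  have : CharP F 2 := charP_of_card_eq_prime_pow hF
  have h_pow : 2 ^ 2 ≤ 2 ^ r := Nat.pow_le_pow_right two_pos hr
  set n := 2 ^ r - 1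
  have h_mem {c : F[X]} : c ∈ cyclicCode F (2 * n) ((X - 1) ^ 2 * minpoly F β) ↔
      c.degree < (2 * n : ℕ) ∧ (X - 1) ^ 2 * minpoly F β ∣ c :=
    mem_cyclicCode (X_sub_one_sq_mul_minpoly_dvd_X_pow_sub_one (by omega) hβ)
  have h_lower : ∀ c ∈ cyclicCode F (2 * n) ((X - 1) ^ 2 * minpoly F β), c ≠ 0 →
      4 ≤ c.support.card := by
    intro c hc hc0
    obtain ⟨h_degree, q, rfl⟩ := h_mem.1 hc
    exact four_le_card_support_of_aeval_primitiveRoot_eq_zero hF her hβ hc0 h_degree (by simp)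
      (by simp [derivative_mul, derivative_pow]) (by simp)
  have h_ne : ((X - 1) * (X ^ n - 1) : F[X]) ≠ 0 :=
    mul_ne_zero (X_sub_C_ne_zero 1) (X_pow_sub_C_ne_zero (by omega) 1)
  have h_codeword :
      ((X - 1) * (X ^ n - 1) : F[X]) ∈ cyclicCode F (2 * n) ((X - 1) ^ 2 * minpoly F β) := by
    refine h_mem.2 ⟨?_, X_sub_one_sq_mul_minpoly_dvd (by omega) hβ⟩
    rw [← natDegree_lt_iff_degree_lt h_ne, natDegree_X_sub_one_mul_X_pow_sub_one F (by omega)]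
    omega
  have h_least : IsLeast {w | ∃ c ∈ cyclicCode F (2 * n) ((X - 1) ^ 2 * minpoly F β),
      c ≠ 0 ∧ c.support.card = w} 4 := by
    refine ⟨⟨_, h_codeword, h_ne, ?_⟩, ?_⟩
    · exact le_antisymm (card_support_X_sub_one_mul_X_pow_sub_one_le F n)
        (h_lower _ h_codeword h_ne)
    · rintro _ ⟨c, hc, hc0, rfl⟩
      exact h_lower c hc hc0
  exact h_least.csInf_eq

end Code

theorem statement9_general {F K : Type*} [Field F] [Fintype F] [Field K] [Algebra F K]
    {e r n : ℕ} (hF : Fintype.card F = 2 ^ e) (her : e.Coprime r) (hr : 2 ≤ r)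
    (hn : n = 2 ^ r - 1) {β : K} (hβ : IsPrimitiveRoot β n) :
    (minpoly F β).natDegree = r ∧
    Module.finrank F (cyclicCode F (2 * n) ((X - 1) ^ 2 * minpoly F β)) = 2 * n - r - 2 ∧
    minDist (cyclicCode F (2 * n) ((X - 1) ^ 2 * minpoly F β)) = 4 ∧
    (e = 1 ∨ e = 2 ∧ 5 ≤ r →
      ∀ D : Set (Fin (2 * n) → F),
        Nat.card D = Nat.card (cyclicCode F (2 * n) ((X - 1) ^ 2 * minpoly F β)) →
          setMinDist D ≤ 4) := by
  subst hn
  have h_finrank := finrank_cyclicCode_X_sub_one_sq_mul_minpoly_add hF her hr hβ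
  refine ⟨natDegree_minpoly_of_isPrimitiveRoot Nat.prime_two hF her (by omega) hβ, by omega,
    minDist_cyclicCode_X_sub_one_sq_mul_minpoly hF her hr hβ, fun h_cases D hD => ?_⟩
  have h_volume : Fintype.card F ^ (r + 2) <
      hammingBallVolume (Fintype.card F) (2 * (2 ^ r - 1)) 2 := by
    rw [hF]
    rcases h_cases with rfl | ⟨rfl, hr⟩
    · exact two_pow_lt_hammingBallVolume hr
    · exact four_pow_lt_hammingBallVolume hr
  refine setMinDist_le_of_lt_card_mul_hammingBallVolume (t := 2) ?_
  rw [hD, card_cyclicCode]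
  nth_rw 1 [← h_finrank]
  rw [pow_add]
  exact Nat.mul_lt_mul_of_pos_left h_volume (pow_pos Fintype.card_pos _)

/-- for `m ≥ 2`, `n = 2^{2m-1} - 1` and `β` a primitive `n`-th root of unity
in `F_{4^{2m-1}}`, the minimal polynomial `m_β(x)` over `F_4` has degree `2m - 1`, and the
cyclic code of length `2n` over `F_4` with generator polynomial `(x-1)^2 m_β(x)` has
dimension `2n - 2m - 1` and minimum distance exactly `4`; for `m ≥ 3` it is
distance-optimal. -/
theorem statement9 {F K : Type*} [Field F] [Fintype F] [Field K] [Fintype K] [Algebra F K]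
    (hF : Fintype.card F = 4)
    (m : ℕ) (hm : 2 ≤ m) (hK : Fintype.card K = 4 ^ (2 * m - 1))
    (n : ℕ) (hn : n = 2 ^ (2 * m - 1) - 1)
    (β : K) (hβ : IsPrimitiveRoot β n) :
    (minpoly F β).natDegree = 2 * m - 1 ∧
    Module.finrank F (cyclicCode F (2 * n) ((X - 1) ^ 2 * minpoly F β)) =
      2 * n - 2 * m - 1 ∧
    minDist (cyclicCode F (2 * n) ((X - 1) ^ 2 * minpoly F β)) = 4 ∧
    (3 ≤ m →
      ∀ D : Set (Fin (2 * n) → F),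
        Nat.card D = Nat.card (cyclicCode F (2 * n) ((X - 1) ^ 2 * minpoly F β)) →
          setMinDist D ≤ 4) := by
  obtain ⟨h_natDegree, h_finrank, h_minDist, h_optimal⟩ :=
    statement9_general (e := 2) hF (Nat.coprime_two_left.2 ⟨m - 1, by omega⟩) (by omega) hn hβ
  exact ⟨h_natDegree, by omega, h_minDist, fun hm3 => h_optimal (.inr ⟨rfl, by omega⟩)⟩
end

section
/- Let m ≥ 5 be an integer, n = 2^m − 1, and let β be a primitive element of F_{2^m}. Then the cyclic code of length 2n over F_2 with generator polynomial (x−1)^2 m_β(x)^2 m_{β^3}(x) m_{β^5}(x) has dimension 2(2^m − 1) − 4m − 2 and minimum distance exactly 8. -/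
open Polynomial

/-! Write `g₁ = (x - 1) m_β` and `g₂ = m_{β³} m_{β⁵}`, so that the generator is `g₁² g₂` with
`g₁ g₂ ∣ xⁿ - 1`. Split a codeword of length `2n` as `c = a + xⁿ b`; its weight is `wt a + wt b`,
and `c = (a + b) + b (xⁿ - 1)` in characteristic two. If `a + b ≠ 0`, then `a + b` is a nonzero
codeword of the cyclic code `⟨g₁ g₂⟩` of length `n`, whose weight is at least `8` by the BCH bound
(its zeros include `1, β, …, β⁶`). Otherwise `c = b (xⁿ - 1)`, and since `xⁿ - 1` is squarefree
`b` is a nonzero codeword of `⟨g₁⟩`, whose weight is at least `4` (zeros `1, β, β²`). Equality is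
attained by `b = 1 + x + x² + xᵏ`, where `βᵏ = 1 + β + β²`. The degrees of the minimal polynomials
and their coprimality come from the sizes and the disjointness of the cyclotomic cosets of
`1`, `3`, `5`. -/

section CyclicCode

variable {F : Type*} [Field F] {N : ℕ} {g c : F[X]}

theorem mem_cyclicCode_iff (hg : g ∣ X ^ N - 1) :
    c ∈ cyclicCode F N g ↔ c.degree < N ∧ g ∣ c := by
  have hspan : Ideal.span ({g, X ^ N - 1} : Set F[X]) = Ideal.span {g} :=
    Ideal.span_pair_eq_span_left_iff_dvd.2 hg
  rw [cyclicCode, hspan, Submodule.mem_inf, mem_degreeLT, Submodule.restrictScalars_mem,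
    Ideal.mem_span_singleton]

theorem finrank_cyclicCode (hg : g ∣ X ^ N - 1) (hg0 : g ≠ 0) :
    Module.finrank F (cyclicCode F N g) = N - g.natDegree := by
  have degree_mul_lt_iff (q : F[X]) :
      (g * q).degree < N ↔ q.degree < (N - g.natDegree : ℕ) := by
    rcases eq_or_ne q 0 with rfl | hq
    · simp
    · rw [degree_mul, degree_eq_natDegree hg0, degree_eq_natDegree hq]
      norm_cast
      omega
  have code_eq_map :
      cyclicCode F N g = (degreeLT F (N - g.natDegree)).map (LinearMap.mulLeft F g) := by
    ext c
    simp only [mem_cyclicCode_iff hg, Submodule.mem_map, mem_degreeLT, LinearMap.mulLeft_apply]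
    constructor
    · rintro ⟨hdeg, q, rfl⟩
      exact ⟨q, (degree_mul_lt_iff q).1 hdeg, rfl⟩
    · rintro ⟨q, hq, rfl⟩
      exact ⟨(degree_mul_lt_iff q).2 hq, dvd_mul_right g q⟩
  have mulLeft_injective : Function.Injective (LinearMap.mulLeft F g) :=
    mul_right_injective₀ hg0
  rw [code_eq_map, ← (Submodule.equivMapOfInjective _ mulLeft_injective _).finrank_eq,
    (degreeLTEquiv F _).finrank_eq, Module.finrank_fin_fun]

theorem minDist_eq_of_forall_le {C : Submodule F F[X]} (hc : c ∈ C) (hc0 : c ≠ 0)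
    (hmin : ∀ c' ∈ C, c' ≠ 0 → c.support.card ≤ c'.support.card) :
    minDist C = c.support.card := by
  refine IsLeast.csInf_eq ⟨⟨c, hc, hc0, rfl⟩, ?_⟩
  rintro _ ⟨c', hc', hc'0, rfl⟩
  exact hmin c' hc' hc'0

end CyclicCode

section SplitWord

theorem exists_eq_add_X_pow_mul {R : Type*} [Ring R] {n k : ℕ} {c : R[X]}
    (hc : c.degree < (n + k : ℕ)) :
    ∃ a b : R[X], a.degree < n ∧ b.degree < k ∧ c = a + X ^ n * b := by
  nontriviality R
  have hdecomp := modByMonic_add_div c (X ^ n)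
  have ha : (c %ₘ X ^ n).degree < n := by
    simpa only [degree_X_pow] using degree_modByMonic_lt c (monic_X_pow n)
  refine ⟨_, _, ha, (degree_lt_iff_coeff_zero _ _).2 fun j hj ↦ ?_, hdecomp.symm⟩
  have hcoeff := congrArg (coeff · (j + n)) hdecomp
  simpa only [coeff_add, coeff_X_pow_mul, (degree_lt_iff_coeff_zero _ _).1 ha (j + n) (by omega),
    (degree_lt_iff_coeff_zero _ _).1 hc (j + n) (by omega), zero_add] using hcoeff

theorem card_support_add_X_pow_mul {R : Type*} [Semiring R] {n : ℕ} {a : R[X]}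
    (ha : a.degree < n) (b : R[X]) :
    (a + X ^ n * b).support.card = a.support.card + b.support.card := by
  have coeff_a {i : ℕ} (hi : n ≤ i) : a.coeff i = 0 := (degree_lt_iff_coeff_zero a n).1 ha i hi
  have hdisj : Disjoint a.support (b.support.map (addRightEmbedding n)) := by
    simp only [Finset.disjoint_left, Finset.mem_map, addRightEmbedding_apply]
    rintro _ hi ⟨j, -, rfl⟩
    exact mem_support_iff.1 hi (coeff_a (Nat.le_add_left n j))
  have hsupport : (a + X ^ n * b).support = a.support ∪ b.support.map (addRightEmbedding n) := by
    ext i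
    rw [Finset.mem_union, mem_support_iff, coeff_add, coeff_X_pow_mul']
    split_ifs with hi
    · obtain ⟨j, rfl⟩ := Nat.exists_eq_add_of_le' hi
      simp [coeff_a hi]
    · have : ∀ j, j + n ≠ i := by omega
      simp [this]
  rw [hsupport, Finset.card_union_of_disjoint hdisj, Finset.card_map]

end SplitWord

section RepeatedRoot

variable {F : Type*} [Field F] {n : ℕ} {g₁ g₂ b : F[X]}

theorem sq_mul_dvd_X_pow_two_mul_sub_one [CharP F 2] (hg : g₁ * g₂ ∣ X ^ n - 1) :
    g₁ ^ 2 * g₂ ∣ X ^ (2 * n) - 1 := by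
  have hsq : (X ^ (2 * n) - 1 : F[X]) = (X ^ n - 1) * (X ^ n - 1) := by
    rw [← sq, sub_pow_char, one_pow, ← pow_mul, mul_comm]
  have hfactor : g₁ ^ 2 * g₂ = g₁ * (g₁ * g₂) := by ring
  rw [hsq, hfactor]
  exact mul_dvd_mul ((dvd_mul_right g₁ g₂).trans hg) hg

theorem mul_X_pow_sub_one_mem_cyclicCode [CharP F 2] (hg : g₁ * g₂ ∣ X ^ n - 1)
    (hb : b ∈ cyclicCode F n g₁) :
    b * (X ^ n - 1) ∈ cyclicCode F (2 * n) (g₁ ^ 2 * g₂) := by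
  obtain ⟨hdeg, hdvd⟩ := (mem_cyclicCode_iff ((dvd_mul_right g₁ g₂).trans hg)).1 hb
  refine (mem_cyclicCode_iff (sq_mul_dvd_X_pow_two_mul_sub_one hg)).2 ⟨?_, ?_⟩
  · have hdeg_sub : (X ^ n - 1 : F[X]).degree ≤ n := by
      compute_degree
      exact le_rfl
    calc (b * (X ^ n - 1)).degree = (X ^ n - 1 : F[X]).degree + b.degree := by
          rw [mul_comm, degree_mul]
      _ ≤ n + b.degree := by gcongr
      _ < n + n := WithBot.add_lt_add_left (WithBot.natCast_ne_bot n) hdeg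
      _ = (2 * n : ℕ) := by rw [two_mul, Nat.cast_add]
  · rw [sq, mul_assoc]
    exact mul_dvd_mul hdvd hg

theorem card_support_mul_X_pow_sub_one (hb : b.degree < n) :
    (b * (X ^ n - 1)).support.card = 2 * b.support.card := by
  have hsplit : b * (X ^ n - 1) = -b + X ^ n * b := by ring
  rw [hsplit, card_support_add_X_pow_mul ((degree_neg b).trans_lt hb), support_neg, two_mul]

theorem dvd_of_sq_mul_dvd_mul_X_pow_sub_one (hn : (n : F) ≠ 0) (hg : g₁ * g₂ ∣ X ^ n - 1)
    (hb : g₁ ^ 2 * g₂ ∣ b * (X ^ n - 1)) : g₁ ∣ b := by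
  have hsep : (X ^ n - 1 : F[X]).Separable := X_pow_sub_one_separable_iff.2 hn
  obtain ⟨h, hh⟩ := hg
  have hcop : IsCoprime g₁ h := by
    rw [hh, mul_assoc] at hsep
    exact hsep.isCoprime.of_mul_right_right
  have hg0 : g₁ * g₂ ≠ 0 := left_ne_zero_of_mul (hh ▸ hsep.ne_zero)
  have hdvd : g₁ * g₂ * g₁ ∣ g₁ * g₂ * (b * h) := by
    convert hb using 1
    · ring
    · rw [hh]; ring
  exact hcop.dvd_of_dvd_mul_right ((mul_dvd_mul_iff_left hg0).1 hdvd)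

theorem min_le_card_support_of_mem_cyclicCode_sq_mul [CharP F 2] {d₁ d₂ : ℕ} (hn : (n : F) ≠ 0)
    (hg : g₁ * g₂ ∣ X ^ n - 1)
    (h₁ : ∀ b ∈ cyclicCode F n g₁, b ≠ 0 → d₁ ≤ b.support.card)
    (h₂ : ∀ v ∈ cyclicCode F n (g₁ * g₂), v ≠ 0 → d₂ ≤ v.support.card)
    {c : F[X]} (hc : c ∈ cyclicCode F (2 * n) (g₁ ^ 2 * g₂)) (hc0 : c ≠ 0) :
    min (2 * d₁) d₂ ≤ c.support.card := by
  obtain ⟨hdeg, hdvd⟩ := (mem_cyclicCode_iff (sq_mul_dvd_X_pow_two_mul_sub_one hg)).1 hc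
  obtain ⟨a, b, ha, hb, rfl⟩ := exists_eq_add_X_pow_mul (two_mul n ▸ hdeg)
  have hfold : a + X ^ n * b = (a + b) + b * (X ^ n - 1) := by ring
  rcases eq_or_ne (a + b) 0 with hab | hab
  · rw [hfold, hab, zero_add] at hdvd hc0 ⊢
    have hb_mem : b ∈ cyclicCode F n g₁ :=
      (mem_cyclicCode_iff ((dvd_mul_right g₁ g₂).trans hg)).2
        ⟨hb, dvd_of_sq_mul_dvd_mul_X_pow_sub_one hn hg hdvd⟩
    rw [card_support_mul_X_pow_sub_one hb]
    exact (min_le_left _ _).trans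
      (Nat.mul_le_mul_left 2 (h₁ b hb_mem (left_ne_zero_of_mul hc0)))
  · have hdvd' : g₁ * g₂ ∣ a + b := by
      refine (dvd_add_left (hg.mul_left b)).1 (hfold ▸ dvd_trans ?_ hdvd)
      exact mul_dvd_mul_right (dvd_pow_self g₁ two_ne_zero) g₂
    have hab_mem : a + b ∈ cyclicCode F n (g₁ * g₂) :=
      (mem_cyclicCode_iff hg).2 ⟨(degree_add_le a b).trans_lt (max_lt ha hb), hdvd'⟩
    rw [card_support_add_X_pow_mul ha]
    calc min (2 * d₁) d₂ ≤ (a + b).support.card := (min_le_right _ _).trans (h₂ _ hab_mem hab)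
      _ ≤ (a.support ∪ b.support).card := Finset.card_le_card support_add
      _ ≤ a.support.card + b.support.card := Finset.card_union_le _ _

end RepeatedRoot

section BCHBound

theorem lt_card_support_of_aeval_pow_eq_zero {R A : Type*} [CommRing R] [CommRing A] [IsDomain A]
    [Algebra R A] [FaithfulSMul R A] {N b d : ℕ} {β : A} (hβ : IsPrimitiveRoot β N) {p : R[X]}
    (hp : p ≠ 0) (hdeg : p.degree < N) (hroots : ∀ j < d, aeval (β ^ (b + j)) p = 0) :
    d < p.support.card := by
  by_contra! hcard
  have lt_of_mem {i : ℕ} (hi : i ∈ p.support) : i < N := by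
    exact_mod_cast (le_degree_of_mem_supp i hi).trans_lt hdeg
  let e := p.support.equivFin.symm
  have locators_injective : Function.Injective fun i ↦ β ^ (e i : ℕ) := fun i j hij ↦
    e.injective (Subtype.ext (hβ.pow_inj (lt_of_mem (e i).2) (lt_of_mem (e j).2) hij))
  have syndrome_eq_zero (j : Fin p.support.card) :
      ∑ i, algebraMap R A (p.coeff (e i)) * β ^ (b * e i) * (β ^ (e i : ℕ)) ^ (j : ℕ) = 0 := by
    rw [← hroots j (j.2.trans_le hcard), aeval_def, eval₂_eq_sum, Polynomial.sum_def,
      ← Finset.sum_coe_sort p.support, ← Equiv.sum_comp e]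
    refine Finset.sum_congr rfl fun i _ ↦ ?_
    ring
  have coeff_eq_zero :=
    Matrix.eq_zero_of_forall_pow_sum_mul_pow_eq_zero locators_injective syndrome_eq_zero
  obtain ⟨i, hi⟩ := support_nonempty.2 hp
  have hβ0 : β ≠ 0 := hβ.ne_zero (lt_of_mem hi).ne_bot
  have hcoeff : algebraMap R A (p.coeff i) = 0 := by
    simpa [e, pow_ne_zero _ hβ0] using congrFun coeff_eq_zero (p.support.equivFin ⟨i, hi⟩)
  exact mem_support_iff.1 hi ((FaithfulSMul.algebraMap_eq_zero_iff R A).1 hcoeff)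

theorem aeval_pow_card {F A : Type*} [Field F] [Fintype F] [CommRing A] [Algebra F A] (p : F[X])
    (x : A) : aeval (x ^ Fintype.card F) p = aeval x p ^ Fintype.card F := by
  rw [← expand_aeval, FiniteField.expand_card, map_pow]

variable {A : Type*} [CommRing A] [Algebra (ZMod 2) A] {n : ℕ} {β : A} {c : (ZMod 2)[X]}

theorem aeval_sq_eq_zero (hc : aeval β c = 0) : aeval (β ^ 2) c = 0 := by
  simpa [hc] using aeval_pow_card c β

variable [IsDomain A]

theorem four_le_card_support_of_aeval_eq_zero (hβ : IsPrimitiveRoot β n) (hc : c ≠ 0)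
    (hdeg : c.degree < n) (hroots : ∀ i ∈ ({0, 1} : Finset ℕ), aeval (β ^ i) c = 0) :
    4 ≤ c.support.card := by
  have h₂ := aeval_sq_eq_zero (hroots 1 (by simp))
  refine lt_card_support_of_aeval_pow_eq_zero (b := 0) hβ hc hdeg fun j hj ↦ ?_
  rw [zero_add]
  interval_cases j
  exacts [hroots 0 (by simp), hroots 1 (by simp), by simpa using h₂]

theorem eight_le_card_support_of_aeval_eq_zero (hβ : IsPrimitiveRoot β n) (hc : c ≠ 0)
    (hdeg : c.degree < n) (hroots : ∀ i ∈ ({0, 1, 3, 5} : Finset ℕ), aeval (β ^ i) c = 0) :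
    8 ≤ c.support.card := by
  have h₂ := aeval_sq_eq_zero (hroots 1 (by simp))
  have h₄ := aeval_sq_eq_zero h₂
  have h₆ := aeval_sq_eq_zero (hroots 3 (by simp))
  simp only [← pow_mul] at h₂ h₄ h₆
  refine lt_card_support_of_aeval_pow_eq_zero (b := 0) hβ hc hdeg fun j hj ↦ ?_
  rw [zero_add]
  interval_cases j
  exacts [hroots 0 (by simp), hroots 1 (by simp), h₂, hroots 3 (by simp), h₄,
    hroots 5 (by simp), h₆]

end BCHBound

section CyclotomicCoset

variable {q m a b i : ℕ}

theorem eq_zero_and_eq_of_mul_pow_modEq_of_two_mul_le (hq : 2 ≤ q) (hm : 0 < m) (hi : 2 * i ≤ m)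
    (hqa : ¬q ∣ a) (hqb : ¬q ∣ b) (ha : a ^ 2 ≤ q ^ m) (hb : b ^ 2 ≤ q ^ m)
    (hab : b * q ^ i ≡ a [MOD q ^ m - 1]) : i = 0 ∧ b = a := by
  have ha_pos : 0 < a := Nat.pos_of_ne_zero fun h ↦ hqa (h ▸ dvd_zero q)
  have hbq_pos : 0 < b * q ^ i :=
    Nat.mul_pos (Nat.pos_of_ne_zero fun h ↦ hqb (h ▸ dvd_zero q)) (by positivity)
  have ha_lt : a < q ^ m := by
    have : 1 < q ^ m := Nat.one_lt_pow hm.ne' hq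
    nlinarith
  have hbq_le : b * q ^ i ≤ q ^ m := by
    rw [← Nat.pow_le_pow_iff_left two_ne_zero]
    calc (b * q ^ i) ^ 2 = b ^ 2 * q ^ (2 * i) := by ring
      _ ≤ q ^ m * q ^ m := Nat.mul_le_mul hb (Nat.pow_le_pow_right (by omega) hi)
      _ = (q ^ m) ^ 2 := (sq _).symm
  have hbq_ne : b * q ^ i ≠ q ^ m := fun h ↦ by
    have hb_eq : b = q ^ (m - i) := by
      rw [← Nat.sub_add_cancel (by omega : i ≤ m), pow_add] at h
      exact Nat.eq_of_mul_eq_mul_right (by positivity) h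
    exact hqb (hb_eq ▸ dvd_pow_self q (by omega))
  have heq : b * q ^ i = a := by
    obtain ⟨x, hx⟩ := Nat.exists_eq_succ_of_ne_zero hbq_pos.ne'
    obtain ⟨y, hy⟩ := Nat.exists_eq_succ_of_ne_zero ha_pos.ne'
    rw [hx, hy] at hab ⊢
    rw [Nat.ModEq.eq_of_lt_of_lt (Nat.ModEq.add_right_cancel' 1 hab) (by omega) (by omega)]
  have hi0 : i = 0 := by
    by_contra hi0
    exact hqa (heq ▸ (dvd_pow_self q hi0).mul_left b)
  exact ⟨hi0, by simpa [hi0] using heq⟩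

theorem eq_zero_and_eq_of_mul_pow_modEq (hq : 2 ≤ q) (hi : i < m)
    (hqa : ¬q ∣ a) (hqb : ¬q ∣ b) (ha : a ^ 2 ≤ q ^ m) (hb : b ^ 2 ≤ q ^ m)
    (hab : b * q ^ i ≡ a [MOD q ^ m - 1]) : i = 0 ∧ b = a := by
  rcases le_or_gt (2 * i) m with him | him
  · exact eq_zero_and_eq_of_mul_pow_modEq_of_two_mul_le hq (by omega) him hqa hqb ha hb hab
  · -- Multiplying by `q ^ (m - i)` exchanges the roles of `a` and `b`, as `q ^ m ≡ 1`.
    have hqm : q ^ m ≡ 1 [MOD q ^ m - 1] :=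
      ((Nat.modEq_iff_dvd' (Nat.one_le_pow _ _ (by omega))).2 dvd_rfl).symm
    have hba : a * q ^ (m - i) ≡ b [MOD q ^ m - 1] := by
      calc a * q ^ (m - i) ≡ b * q ^ i * q ^ (m - i) [MOD q ^ m - 1] := hab.symm.mul_right _
        _ = b * q ^ m := by rw [mul_assoc, ← pow_add, Nat.add_sub_cancel' hi.le]
        _ ≡ b * 1 [MOD q ^ m - 1] := hqm.mul_left b
        _ = b := mul_one b
    have := eq_zero_and_eq_of_mul_pow_modEq_of_two_mul_le hq (by omega) (by omega)
      hqb hqa hb ha hba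
    omega

end CyclotomicCoset

section MinpolyOfPowers

theorem modEq_of_pow_eq_pow {M : Type*} [CommMonoid M] {x : M} {N a b : ℕ}
    (hx : IsPrimitiveRoot x N) (hN : N ≠ 0) (hpow : x ^ a = x ^ b) : a ≡ b [MOD N] := by
  rw [hx.eq_orderOf]
  exact (hx.isOfFinOrder hN).pow_eq_pow_iff_modEq.1 hpow

variable {F K : Type*} [Field F] [Fintype F] [Field K] [Finite K] [Algebra F K]

theorem minpoly_eq_iff_exists_pow {x y : K} :
    minpoly F x = minpoly F y ↔
      ∃ i < Module.finrank F K, y ^ Fintype.card F ^ i = x := by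
  have frobenius_pow_apply (i : ℕ) :
      (FiniteField.frobeniusAlgEquivOfAlgebraic F K ^ i) y = y ^ Fintype.card F ^ i := by
    rw [AlgEquiv.coe_pow, FiniteField.coe_frobeniusAlgEquivOfAlgebraic_iterate]
  rw [Normal.minpoly_eq_iff_mem_orbit]
  constructor
  · rintro ⟨σ, rfl⟩
    obtain ⟨⟨i, hi⟩, rfl⟩ := (FiniteField.bijective_frobeniusAlgEquivOfAlgebraic_pow F K).2 σ
    exact ⟨i, hi, (frobenius_pow_apply i).symm⟩
  · rintro ⟨i, -, rfl⟩
    exact ⟨FiniteField.frobeniusAlgEquivOfAlgebraic F K ^ i, frobenius_pow_apply i⟩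

theorem pow_card_pow_natDegree_minpoly (x : K) :
    x ^ Fintype.card F ^ (minpoly F x).natDegree = x := by
  have hirr : Irreducible (minpoly F x) := minpoly.irreducible (Algebra.IsIntegral.isIntegral x)
  have hdvd := hirr.natDegree_dvd_iff_dvd_X_pow_card_pow_sub_X.1 dvd_rfl
  have haeval := aeval_eq_zero_of_dvd_aeval_eq_zero hdvd (minpoly.aeval F x)
  simpa [sub_eq_zero, Nat.card_eq_fintype_card] using haeval

variable {q m : ℕ} {β : K}

theorem natDegree_minpoly_pow (hq : Fintype.card F = q) (hm : Module.finrank F K = m)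
    (hβ : IsPrimitiveRoot β (q ^ m - 1)) {a : ℕ} (hqa : ¬q ∣ a) (ha : a ^ 2 ≤ q ^ m) :
    (minpoly F (β ^ a)).natDegree = m := by
  have hq2 : 2 ≤ q := hq ▸ Fintype.one_lt_card
  by_contra hne
  have hlt : (minpoly F (β ^ a)).natDegree < m :=
    lt_of_le_of_ne (hm ▸ minpoly.natDegree_le (β ^ a)) hne
  have hpow := pow_card_pow_natDegree_minpoly (F := F) (β ^ a)
  have hN : q ^ m - 1 ≠ 0 := Nat.sub_ne_zero_of_lt (Nat.one_lt_pow (by omega) hq2)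
  rw [hq, ← pow_mul] at hpow
  exact (minpoly.natDegree_pos (Algebra.IsIntegral.isIntegral (β ^ a))).ne'
    (eq_zero_and_eq_of_mul_pow_modEq hq2 hlt hqa hqa ha ha (modEq_of_pow_eq_pow hβ hN hpow)).1

theorem injOn_minpoly_pow (hq : Fintype.card F = q) (hm : Module.finrank F K = m)
    (hβ : IsPrimitiveRoot β (q ^ m - 1)) :
    Set.InjOn (fun a : ℕ ↦ minpoly F (β ^ a)) {a | ¬q ∣ a ∧ a ^ 2 ≤ q ^ m} := by
  rintro a ⟨hqa, ha⟩ b ⟨hqb, hb⟩ hab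
  obtain ⟨i, hi, hpow⟩ := minpoly_eq_iff_exists_pow.1 hab
  rw [hm] at hi
  have hq2 : 2 ≤ q := hq ▸ Fintype.one_lt_card
  have hN : q ^ m - 1 ≠ 0 := Nat.sub_ne_zero_of_lt (Nat.one_lt_pow (by omega) hq2)
  rw [hq, ← pow_mul] at hpow
  exact (eq_zero_and_eq_of_mul_pow_modEq hq2 hi hqa hqb ha hb
    (modEq_of_pow_eq_pow hβ hN hpow)).2.symm

end MinpolyOfPowers

section GeneratorOfZeros

/-- The product of the minimal polynomials of `β ^ i` for `i ∈ s`. When these are distinct, it is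
the generator polynomial of the cyclic code of all words vanishing at `β ^ i` for `i ∈ s`. -/
noncomputable def generatorOfZeros (F : Type*) [Field F] {K : Type*} [Field K] [Algebra F K]
    (β : K) (s : Finset ℕ) : F[X] :=
  ∏ i ∈ s, minpoly F (β ^ i)

variable {F K : Type*} [Field F] [Field K] [Algebra F K] {β : K} {s : Finset ℕ} {N : ℕ}

theorem generatorOfZeros_mul_of_disjoint {t : Finset ℕ} (hst : Disjoint s t) :
    generatorOfZeros F β s * generatorOfZeros F β t = generatorOfZeros F β (s ∪ t) :=
  (Finset.prod_union hst).symm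

theorem natDegree_minpoly_pow_zero : (minpoly F (β ^ 0)).natDegree = 1 :=
  minpoly.natDegree_eq_one_iff.2 ⟨1, by rw [map_one, pow_zero]⟩

variable [Algebra.IsIntegral F K]

theorem isCoprime_minpoly_of_ne {x y : K} (hxy : minpoly F x ≠ minpoly F y) :
    IsCoprime (minpoly F x) (minpoly F y) := by
  have hx : IsIntegral F x := Algebra.IsIntegral.isIntegral x
  have hy : IsIntegral F y := Algebra.IsIntegral.isIntegral y
  refine ((minpoly.irreducible hx).isCoprime_or_dvd _).resolve_right fun hdvd ↦ hxy ?_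
  exact eq_of_monic_of_associated (minpoly.monic hx) (minpoly.monic hy)
    ((minpoly.irreducible hx).associated_of_dvd (minpoly.irreducible hy) hdvd)

theorem monic_generatorOfZeros : (generatorOfZeros F β s).Monic :=
  monic_prod_of_monic _ _ fun i _ ↦ minpoly.monic (Algebra.IsIntegral.isIntegral (β ^ i))

theorem natDegree_generatorOfZeros :
    (generatorOfZeros F β s).natDegree = ∑ i ∈ s, (minpoly F (β ^ i)).natDegree :=
  natDegree_prod_of_monic _ _ fun i _ ↦ minpoly.monic (Algebra.IsIntegral.isIntegral (β ^ i))

theorem generatorOfZeros_dvd_iff (hs : Set.InjOn (fun i ↦ minpoly F (β ^ i)) s) {c : F[X]} :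
    generatorOfZeros F β s ∣ c ↔ ∀ i ∈ s, aeval (β ^ i) c = 0 := by
  simp only [← minpoly.dvd_iff]
  refine ⟨fun h i hi ↦ (Finset.dvd_prod_of_mem _ hi).trans h, fun h ↦ ?_⟩
  exact Finset.prod_dvd_of_coprime
    (fun i hi j hj hij ↦ isCoprime_minpoly_of_ne (hs.ne hi hj hij)) h

theorem generatorOfZeros_dvd_X_pow_sub_one (hβ : β ^ N = 1)
    (hs : Set.InjOn (fun i ↦ minpoly F (β ^ i)) s) :
    generatorOfZeros F β s ∣ X ^ N - 1 :=
  (generatorOfZeros_dvd_iff hs).2 fun i _ ↦ by simp [pow_right_comm, hβ]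

theorem mem_cyclicCode_generatorOfZeros_iff (hβ : β ^ N = 1)
    (hs : Set.InjOn (fun i ↦ minpoly F (β ^ i)) s) {c : F[X]} :
    c ∈ cyclicCode F N (generatorOfZeros F β s) ↔
      c.degree < N ∧ ∀ i ∈ s, aeval (β ^ i) c = 0 := by
  rw [mem_cyclicCode_iff (generatorOfZeros_dvd_X_pow_sub_one hβ hs), generatorOfZeros_dvd_iff hs]

end GeneratorOfZeros

section BinaryBCHCode

variable {K : Type*} [Field K] [Algebra (ZMod 2) K] {m n : ℕ} {β : K}

theorem exists_pow_eq_one_add_add_sq {K : Type*} [Field K] [Fintype K] [CharP K 2] {β : K}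
    (hK : Fintype.card K = n + 1) (hn : 3 < n) (hβ : IsPrimitiveRoot β n) :
    ∃ k, 2 < k ∧ k < n ∧ β ^ k = 1 + β + β ^ 2 := by
  have : NeZero n := ⟨by omega⟩
  have hβ0 : β ≠ 0 := hβ.ne_zero (by omega)
  have hβ1 : β ≠ 1 := hβ.ne_one (by omega)
  have htwo : (2 : K) = 0 := CharTwo.two_eq_zero
  have hne : 1 + β + β ^ 2 ≠ 0 := fun h ↦
    hβ.pow_ne_one_of_pos_of_lt (by omega) hn (by linear_combination (β - 1) * h)
  have hpow : (1 + β + β ^ 2) ^ n = 1 := by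
    simpa [hK] using FiniteField.pow_card_sub_one_eq_one _ hne
  obtain ⟨k, hkn, hk⟩ := hβ.eq_pow_of_pow_eq_one hpow
  refine ⟨k, ?_, hkn, hk⟩
  by_contra! hk2
  interval_cases k
  · exact mul_ne_zero hβ0 (sub_ne_zero.2 hβ1) (by linear_combination -hk - β * htwo)
  · exact hβ.pow_ne_one_of_pos_of_lt two_ne_zero (by omega) (by linear_combination -hk - htwo)
  · exact hβ1 (by linear_combination -hk - htwo)

theorem exists_card_support_eq_four [Fintype K] (hK : Fintype.card K = n + 1) (hn : 3 < n)
    (hβ : IsPrimitiveRoot β n) :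
    ∃ u : (ZMod 2)[X], u.degree < n ∧ u.support.card = 4 ∧
      ∀ i ∈ ({0, 1} : Finset ℕ), aeval (β ^ i) u = 0 := by
  have : CharP K 2 := charP_of_injective_algebraMap (algebraMap (ZMod 2) K).injective 2
  obtain ⟨k, hk2, hkn, hk⟩ := exists_pow_eq_one_add_add_sq hK hn hβ
  have htwo : (2 : K) = 0 := CharTwo.two_eq_zero
  have hu : ∑ i : Fin 4, C (1 : ZMod 2) * X ^ ![0, 1, 2, k] i = 1 + X + X ^ 2 + X ^ k := by
    simp [Fin.sum_univ_four]
  refine ⟨1 + X + X ^ 2 + X ^ k, ?_, ?_, ?_⟩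
  · refine (?_ : degree _ ≤ (k : WithBot ℕ)).trans_lt (by exact_mod_cast hkn)
    compute_degree!
    exact ⟨hk2.le, le_rfl⟩
  · have exponents_injective : Function.Injective ![0, 1, 2, k] := by
      intro i j hij
      fin_cases i <;> fin_cases j <;> simp_all <;> omega
    rw [← hu]
    exact card_support_eq' _ _ exponents_injective fun _ ↦ one_ne_zero
  · simp only [Finset.forall_mem_insert, Finset.mem_singleton, forall_eq, map_add, map_one,
      map_pow, aeval_X, pow_zero, pow_one, one_pow, hk]
    constructor
    · linear_combination 2 * htwo
    · linear_combination (1 + β + β ^ 2) * htwo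

theorem one_three_five_subset (hm : 5 ≤ m) :
    (({1, 3, 5} : Finset ℕ) : Set ℕ) ⊆ {a | ¬2 ∣ a ∧ a ^ 2 ≤ 2 ^ m} := by
  have hpow : 2 ^ 5 ≤ 2 ^ m := Nat.pow_le_pow_right two_pos hm
  intro a ha
  simp only [Finset.coe_insert, Finset.coe_singleton, Set.mem_insert_iff,
    Set.mem_singleton_iff] at ha
  rcases ha with rfl | rfl | rfl <;> exact ⟨by norm_num, by omega⟩

theorem minDist_cyclicCode_generatorOfZeros_sq_mul [Fintype K] (hK : Fintype.card K = n + 1)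
    (hn : 3 < n) (hβ : IsPrimitiveRoot β n)
    (hinj : Set.InjOn (fun i : ℕ ↦ minpoly (ZMod 2) (β ^ i)) ({0, 1, 3, 5} : Finset ℕ)) :
    minDist (cyclicCode (ZMod 2) (2 * n)
      (generatorOfZeros (ZMod 2) β {0, 1} ^ 2 * generatorOfZeros (ZMod 2) β {3, 5})) = 8 := by
  have hmul : generatorOfZeros (ZMod 2) β {0, 1} * generatorOfZeros (ZMod 2) β {3, 5} =
      generatorOfZeros (ZMod 2) β {0, 1, 3, 5} := generatorOfZeros_mul_of_disjoint (by decide)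
  have hdvd := hmul ▸ generatorOfZeros_dvd_X_pow_sub_one hβ.pow_eq_one hinj
  have hinj₁ : Set.InjOn (fun i : ℕ ↦ minpoly (ZMod 2) (β ^ i)) ({0, 1} : Finset ℕ) :=
    hinj.mono (by gcongr; decide)
  have hn0 : (n : ZMod 2) ≠ 0 := fun h ↦ by
    have : NeZero n := ⟨by omega⟩
    have hnK : (n : K) ≠ 0 := hβ.neZero'.out
    exact hnK (by rw [← map_natCast (algebraMap (ZMod 2) K), h, map_zero])
  obtain ⟨u, hu_deg, hu_card, hu_roots⟩ := exists_card_support_eq_four hK hn hβ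
  have hu : u ∈ cyclicCode (ZMod 2) n (generatorOfZeros (ZMod 2) β {0, 1}) :=
    (mem_cyclicCode_generatorOfZeros_iff hβ.pow_eq_one hinj₁).2 ⟨hu_deg, hu_roots⟩
  have hu_card' : (u * (X ^ n - 1)).support.card = 8 := by
    rw [card_support_mul_X_pow_sub_one hu_deg, hu_card]
  have hu0 : u * (X ^ n - 1) ≠ 0 := card_support_eq_zero.not.1 (by omega)
  refine (minDist_eq_of_forall_le (mul_X_pow_sub_one_mem_cyclicCode hdvd hu) hu0
    fun c hc hc0 ↦ ?_).trans hu_card'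
  rw [hu_card']
  refine min_le_card_support_of_mem_cyclicCode_sq_mul (d₁ := 4) (d₂ := 8) hn0 hdvd
    (fun b hb hb0 ↦ ?_) (fun v hv hv0 ↦ ?_) hc hc0
  · obtain ⟨hdeg, hroots⟩ := (mem_cyclicCode_generatorOfZeros_iff hβ.pow_eq_one hinj₁).1 hb
    exact four_le_card_support_of_aeval_eq_zero hβ hb0 hdeg hroots
  · rw [hmul] at hv
    obtain ⟨hdeg, hroots⟩ := (mem_cyclicCode_generatorOfZeros_iff hβ.pow_eq_one hinj).1 hv
    exact eight_le_card_support_of_aeval_eq_zero hβ hv0 hdeg hroots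

variable [Finite K]

theorem natDegree_minpoly_pow_of_mem_one_three_five (hm : 5 ≤ m)
    (hK : Module.finrank (ZMod 2) K = m) (hβ : IsPrimitiveRoot β (2 ^ m - 1)) {i : ℕ}
    (hi : i ∈ ({1, 3, 5} : Finset ℕ)) : (minpoly (ZMod 2) (β ^ i)).natDegree = m :=
  have ⟨hodd, hsq⟩ := one_three_five_subset hm hi
  natDegree_minpoly_pow (ZMod.card 2) hK hβ hodd hsq

theorem injOn_minpoly_pow_zero_one_three_five (hm : 5 ≤ m)
    (hK : Module.finrank (ZMod 2) K = m) (hβ : IsPrimitiveRoot β (2 ^ m - 1)) :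
    Set.InjOn (fun i : ℕ ↦ minpoly (ZMod 2) (β ^ i)) ({0, 1, 3, 5} : Finset ℕ) := by
  rw [Finset.coe_insert, Set.injOn_insert (by simp)]
  refine ⟨(injOn_minpoly_pow (ZMod.card 2) hK hβ).mono (one_three_five_subset hm), ?_⟩
  rintro ⟨i, hi, heq : minpoly (ZMod 2) (β ^ i) = _⟩
  have hdeg := natDegree_minpoly_pow_of_mem_one_three_five hm hK hβ hi
  rw [heq, natDegree_minpoly_pow_zero] at hdeg
  omega

theorem natDegree_generatorOfZeros_sq_mul (hm : 5 ≤ m)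
    (hK : Module.finrank (ZMod 2) K = m) (hβ : IsPrimitiveRoot β (2 ^ m - 1)) :
    (generatorOfZeros (ZMod 2) β {0, 1} ^ 2 * generatorOfZeros (ZMod 2) β {3, 5}).natDegree =
      4 * m + 2 := by
  have hdeg {i : ℕ} (hi : i ∈ ({1, 3, 5} : Finset ℕ)) :=
    natDegree_minpoly_pow_of_mem_one_three_five hm hK hβ hi
  rw [(monic_generatorOfZeros.pow 2).natDegree_mul monic_generatorOfZeros, natDegree_pow,
    natDegree_generatorOfZeros, natDegree_generatorOfZeros, Finset.sum_pair zero_ne_one,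
    Finset.sum_pair (by decide), natDegree_minpoly_pow_zero, hdeg (by simp), hdeg (by simp),
    hdeg (by simp)]
  ring

end BinaryBCHCode

/-- for `m ≥ 5`, `n = 2^m - 1` and `β` a primitive element of `F_{2^m}`,
the repeated-root binary cyclic code of length `2n` with generator polynomial
`(x-1)^2 m_β(x)^2 m_{β³}(x) m_{β⁵}(x)` has dimension `2(2^m - 1) - 4m - 2` and minimum
distance exactly `8`. -/
theorem statement11 {K : Type*} [Field K] [Fintype K] [Algebra (ZMod 2) K]
    (m : ℕ) (hm : 5 ≤ m) (hK : Fintype.card K = 2 ^ m)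
    (n : ℕ) (hn : n = 2 ^ m - 1)
    (β : K) (hβ : IsPrimitiveRoot β (2 ^ m - 1)) :
    Module.finrank (ZMod 2)
        (cyclicCode (ZMod 2) (2 * n)
          ((X - 1) ^ 2 * (minpoly (ZMod 2) β) ^ 2 * minpoly (ZMod 2) (β ^ 3) *
            minpoly (ZMod 2) (β ^ 5))) =
      2 * (2 ^ m - 1) - 4 * m - 2 ∧
    minDist (cyclicCode (ZMod 2) (2 * n)
        ((X - 1) ^ 2 * (minpoly (ZMod 2) β) ^ 2 * minpoly (ZMod 2) (β ^ 3) *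
          minpoly (ZMod 2) (β ^ 5))) = 8 := by
  subst hn
  have hfinrank : Module.finrank (ZMod 2) K = m := by
    rwa [Module.card_eq_pow_finrank (K := ZMod 2), ZMod.card, Nat.pow_right_inj one_lt_two] at hK
  have hpow : 2 ^ 5 ≤ 2 ^ m := Nat.pow_le_pow_right two_pos hm
  have hinj := injOn_minpoly_pow_zero_one_three_five hm hfinrank hβ
  have hgen : (X - 1) ^ 2 * (minpoly (ZMod 2) β) ^ 2 * minpoly (ZMod 2) (β ^ 3) *
      minpoly (ZMod 2) (β ^ 5) =
        generatorOfZeros (ZMod 2) β {0, 1} ^ 2 * generatorOfZeros (ZMod 2) β {3, 5} := by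
    simp [generatorOfZeros, minpoly.one, mul_pow, mul_assoc]
  rw [hgen]
  refine ⟨?_, minDist_cyclicCode_generatorOfZeros_sq_mul (by omega) (by omega) hβ hinj⟩
  have hdvd : generatorOfZeros (ZMod 2) β {0, 1} * generatorOfZeros (ZMod 2) β {3, 5} ∣
      X ^ (2 ^ m - 1) - 1 := by
    rw [generatorOfZeros_mul_of_disjoint (by decide)]
    exact generatorOfZeros_dvd_X_pow_sub_one hβ.pow_eq_one hinj
  rw [finrank_cyclicCode (sq_mul_dvd_X_pow_two_mul_sub_one hdvd)
      ((monic_generatorOfZeros.pow 2).mul monic_generatorOfZeros).ne_zero,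
    natDegree_generatorOfZeros_sq_mul hm hfinrank hβ, Nat.sub_sub]
end
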